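/- arXiv:1408.2137 — 2 statements merged into one kernel-verified Lean document; each statement's English description precedes it below -/
import Mathlib

section
/- If Y is a λ'-set (a subspace of the Cantor set 2^ω), then the countable power (2^ω \ Y)^ω is countable dense homogeneous. -/
/-- A space is a λ-set if every countable subset is Gδ. -/
def IsLambdaSet (X : Type*) [TopologicalSpace X] : Prop :=
  ∀ D : Set X, D.Countable → IsGδ D

/-- A subspace `X` of the Cantor set `2^ω` is a λ'-set if `X ∪ D` is a λ-set
for every countable `D ⊆ 2^ω`. -/
def IsLambdaPrimeSet (X : Set (ℕ → Bool)) : Prop :=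
  ∀ D : Set (ℕ → Bool), D.Countable → IsLambdaSet ↥(X ∪ D)
/-- A space is countable dense homogeneous (CDH) if for every pair of countable
dense subsets `A`, `B` there is a homeomorphism of the space onto itself
mapping `A` onto `B`. -/
def IsCDH (X : Type*) [TopologicalSpace X] : Prop :=
  ∀ A B : Set X, A.Countable → Dense A → B.Countable → Dense B →
    ∃ h : X ≃ₜ X, h '' A = B

open Set Topology

namespace LamCDH

abbrev C := ℕ → ℕ → Bool

/-- agreement of the first `k` bits of the first `k` coordinates -/
def near (k : ℕ) (x y : C) : Prop := ∀ i < k, ∀ j < k, x i j = y i j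

lemma near_refl (k : ℕ) (x : C) : near k x x := fun _ _ _ _ => rfl
lemma near_symm {k : ℕ} {x y : C} (h : near k x y) : near k y x :=
  fun i hi j hj => (h i hi j hj).symm
lemma near_trans {k : ℕ} {x y z : C} (h : near k x y) (h' : near k y z) : near k x z :=
  fun i hi j hj => (h i hi j hj).trans (h' i hi j hj)
lemma near_mono {k l : ℕ} (hkl : k ≤ l) {x y : C} (h : near l x y) : near k x y :=
  fun i hi j hj => h i (hi.trans_le hkl) j (hj.trans_le hkl)

lemma eq_of_near {x y : C} (h : ∀ n, ∃ k ≥ n, near k x y) : x = y := by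
  funext i j
  obtain ⟨k, hk, h⟩ := h (max i j + 1)
  exact h i (by omega) j (by omega)

lemma isOpen_near {Z : Type*} [TopologicalSpace Z] {f g : Z → C} (hf : Continuous f)
    (hg : Continuous g) (k : ℕ) : IsOpen {z | near k (f z) (g z)} := by
  have : {z | near k (f z) (g z)} =
      ⋂ i ∈ {i | i < k}, ⋂ j ∈ {j | j < k}, {z | f z i j = g z i j} := by
    ext z; simp [near]
  rw [this]
  refine (Set.finite_lt_nat k).isOpen_biInter fun i _ =>
    (Set.finite_lt_nat k).isOpen_biInter fun j _ => ?_
  have hc : Continuous (fun z => (f z i j, g z i j)) := by fun_prop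
  exact (isOpen_discrete {p : Bool × Bool | p.1 = p.2}).preimage hc

lemma isClosed_near {Z : Type*} [TopologicalSpace Z] {f g : Z → C} (hf : Continuous f)
    (hg : Continuous g) (k : ℕ) : IsClosed {z | near k (f z) (g z)} := by
  have : {z | near k (f z) (g z)} =
      ⋂ i ∈ {i | i < k}, ⋂ j ∈ {j | j < k}, {z | f z i j = g z i j} := by
    ext z; simp [near]
  rw [this]
  refine isClosed_biInter fun i _ => isClosed_biInter fun j _ => ?_
  exact isClosed_eq (by fun_prop) (by fun_prop)

lemma unif {Z : Type*} [TopologicalSpace Z] {f g : Z → C} (hf : Continuous f)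
    (hg : Continuous g) {S : Set Z} (hS : IsCompact S) (h : ∀ z ∈ S, f z ≠ g z) :
    ∃ k, ∀ z ∈ S, ¬ near k (f z) (g z) := by
  obtain ⟨k, hk⟩ := hS.elim_directed_cover (fun k => {z | near k (f z) (g z)}ᶜ)
    (fun k => (isClosed_near hf hg k).isOpen_compl)
    (by
      intro z hz
      by_contra hcon
      simp only [mem_iUnion, mem_compl_iff, mem_ofPred_eq, not_exists, not_not] at hcon
      exact h z hz (eq_of_near fun n => ⟨n, le_rfl, hcon n⟩))
    (directed_of_isDirected_le (by
      intro a b hab z hz hn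
      exact hz (near_mono hab hn)))
  exact ⟨k, fun z hz hn => hk hz hn⟩

lemma exists_nhd {V : Set C} (hV : IsOpen V) {x : C} (hx : x ∈ V) :
    ∃ k, ∀ y, near k x y → y ∈ V := by
  obtain ⟨k, hk⟩ := unif (f := fun _ : C => x) (g := fun y => y) continuous_const continuous_id
    (S := Vᶜ) hV.isClosed_compl.isCompact (by rintro z hz rfl; exact hz hx)
  exact ⟨k, fun y hy => by_contra fun h => hk y h hy⟩

lemma exists_sep {S T : Set C} (hS : IsClosed S) (hT : IsClosed T) (h : ∀ x ∈ S, x ∉ T) :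
    ∃ k, ∀ x ∈ S, ∀ y ∈ T, ¬ near k x y := by
  obtain ⟨k, hk⟩ := unif (f := fun p : C × C => p.1) (g := fun p => p.2) continuous_fst
    continuous_snd (S := S ×ˢ T) (hS.isCompact.prod hT.isCompact)
    (by rintro ⟨a, b⟩ ⟨h1, h2⟩ hab; simp only at hab h1 h2; subst hab; exact h _ h1 h2)
  exact ⟨k, fun x hx y hy => hk (x, y) ⟨hx, hy⟩⟩

lemma continuous_of_near {u : C → ℕ} {k : ℕ} (h : ∀ x y, near k x y → u x = u y) :
    Continuous u := by
  rw [continuous_discrete_rng]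
  intro n
  rw [isOpen_iff_mem_nhds]
  intro x hx
  refine Filter.mem_of_superset ((isOpen_near (f := fun _ : C => x) continuous_const
    continuous_id k).mem_nhds (near_refl k x)) ?_
  intro y hy
  exact (h x y hy).symm.trans hx

lemma unif_nat {u : C → ℕ} (hu : Continuous u) : ∃ k, ∀ x y, near k x y → u x = u y := by
  obtain ⟨k, hk⟩ := unif (f := fun p : C × C => p.1) (g := fun p => p.2) continuous_fst
    continuous_snd (S := {p : C × C | u p.1 = u p.2}ᶜ)
    (by
      have hc : Continuous (fun p : C × C => (u p.1, u p.2)) := by fun_prop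
      exact ((isOpen_discrete {p : ℕ × ℕ | p.1 = p.2}).preimage hc).isClosed_compl.isCompact)
    (by rintro ⟨a, b⟩ h1 hab; simp only at hab; subst hab; exact h1 rfl)
  exact ⟨k, fun x y h => by_contra fun h' => hk (x, y) h' h⟩

def trunc (k : ℕ) (x : C) : C := fun i j => if i < k ∧ j < k then x i j else false

lemma near_trunc (k : ℕ) (x : C) : near k (trunc k x) x := by
  intro i hi j hj
  simp [trunc, hi, hj]

lemma trunc_eq {k : ℕ} {x y : C} (h : near k x y) : trunc k x = trunc k y := by
  funext i j
  unfold trunc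
  split_ifs with hh
  · exact h i hh.1 j hh.2
  · rfl

lemma exU {c : C → ℕ} (hc : Continuous c) (k : ℕ) :
    ∃ u : C → ℕ, Continuous u ∧ ∀ x y, u x = u y → near k x y ∧ c x = c y := by
  refine ⟨fun x => Nat.pair (Encodable.encode (fun (i j : Fin k) => x i j)) (c x), ?_, ?_⟩
  · obtain ⟨l, hl⟩ := unif_nat hc
    refine continuous_of_near (k := max k l) fun x y h => ?_
    have h1 : (fun (i j : Fin k) => x i j) = (fun (i j : Fin k) => y i j) := by
      funext i j
      exact h i (by have := i.2; omega) j (by have := j.2; omega)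
    rw [h1, hl x y (near_mono (le_max_right _ _) h)]
  · intro x y h
    obtain ⟨h1, h2⟩ := Nat.pair_eq_pair.1 h
    refine ⟨fun i hi j hj => ?_, h2⟩
    have := Encodable.encode_injective h1
    exact congrFun (congrFun this ⟨i, hi⟩) ⟨j, hj⟩

lemma extC {R : Set (C × C)} (hR : IsClosed R)
    (hfun : ∀ p ∈ R, ∀ q ∈ R, p.1 = q.1 → p = q) {w : C × C → ℕ} (hw : Continuous w)
    {u : C → ℕ} (hu : Continuous u) (hur : ∀ x, ∃ p ∈ R, u p.1 = u x) :
    ∃ c : C → ℕ, Continuous c ∧ (∀ p ∈ R, c p.1 = w p) ∧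
      ∀ x, ∃ p ∈ R, c x = w p ∧ u p.1 = u x := by
  obtain ⟨k1, hk1⟩ := unif_nat hu
  obtain ⟨k2, hk2⟩ := unif (f := fun p : (C × C) × (C × C) => p.1.1) (g := fun p => p.2.1)
    (by fun_prop) (by fun_prop)
    (S := (R ×ˢ R) ∩ {p : (C × C) × (C × C) | w p.1 = w p.2}ᶜ)
    (by
      have hc : Continuous (fun p : (C × C) × (C × C) => (w p.1, w p.2)) := by fun_prop
      exact ((hR.prod hR).inter
        ((isOpen_discrete {p : ℕ × ℕ | p.1 = p.2}).preimage hc).isClosed_compl).isCompact)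
    (by
      rintro ⟨p, q⟩ ⟨⟨hp, hq⟩, h1⟩ hab
      exact h1 (congrArg w (hfun p hp q hq hab)))
  have hz : ∀ x, ∃ p ∈ R, ((∃ q ∈ R, near (max k1 k2) q.1 x) → near (max k1 k2) p.1 x) ∧
      u p.1 = u x := by
    intro x
    by_cases h : ∃ q ∈ R, near (max k1 k2) q.1 x
    · obtain ⟨q, hq, hn⟩ := h
      exact ⟨q, hq, fun _ => hn, hk1 _ _ (near_mono (le_max_left _ _) hn)⟩
    · obtain ⟨p, hp, h'⟩ := hur x
      exact ⟨p, hp, fun h'' => absurd h'' h, h'⟩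
  choose z hzR hz1 hz2 using hz
  refine ⟨fun x => w (z (trunc (max k1 k2) x)), ?_, ?_, ?_⟩
  · exact continuous_of_near (k := max k1 k2) fun x y h => by rw [trunc_eq h]
  · intro p hp
    by_contra hne
    have h1 := hz1 (trunc (max k1 k2) p.1) ⟨p, hp, near_symm (near_trunc _ _)⟩
    have h2 := near_trans h1 (near_trunc _ _)
    exact hk2 (z (trunc (max k1 k2) p.1), p) ⟨⟨hzR _, hp⟩, hne⟩
      (near_mono (le_max_right _ _) h2)
  · intro x
    refine ⟨_, hzR _, rfl, ?_⟩
    rw [hz2]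
    exact hk1 _ _ (near_mono (le_max_left _ _) (near_trunc _ _))

lemma neBot_C (x : C) : Filter.NeBot (𝓝[≠] x) := by
  rw [← mem_closure_iff_nhdsWithin_neBot, mem_closure_iff]
  intro V hV hx
  obtain ⟨k, hk⟩ := exists_nhd hV hx
  refine ⟨fun i j => if i < k then x i j else !(x i j), hk _ ?_, ?_⟩
  · intro i hi j hj
    simp [hi]
  · intro h
    have := congrFun (congrFun h k) k
    simp at this

lemma dense_pick {B : Set C} (hB : Dense B) {S : Set C} (hS : S.Finite) {V : Set C}
    (hV : IsOpen V) (hne : V.Nonempty) : ∃ b ∈ B, b ∈ V ∧ b ∉ S := by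
  have : ∀ x : C, Filter.NeBot (𝓝[≠] x) := neBot_C
  obtain ⟨b, h1, h2⟩ := (hB.sdiff_finite hS).inter_open_nonempty V hV hne
  exact ⟨b, h2.1, h1, h2.2⟩

/-- The standing hypotheses. -/
structure Hyp (P A B : Set C) (F : ℕ → Set C) : Prop where
  dA : Dense A
  dB : Dense B
  AP : A ⊆ P
  BP : B ⊆ P
  AF : ∀ n, ∀ x ∈ A, x ∉ F n
  BF : ∀ n, ∀ x ∈ B, x ∉ F n
  Fc : ∀ n, IsClosed (F n)
  Fm : Monotone F
  cov : ∀ x, x ∉ P → ∃ n, x ∈ F n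
  emb : ∀ n, ∀ V : Set C, IsOpen V → V.Nonempty → ∃ e : C → C, Continuous e ∧
    Function.Injective e ∧ ∀ x, e x ∈ V ∧ e x ∉ A ∧ e x ∉ B ∧ e x ∉ F n ∧ (x ∈ P ↔ e x ∈ P)

lemma Hyp.symm {P A B : Set C} {F : ℕ → Set C} (H : Hyp P A B F) : Hyp P B A F where
  dA := H.dB
  dB := H.dA
  AP := H.BP
  BP := H.AP
  AF := H.BF
  BF := H.AF
  Fc := H.Fc
  Fm := H.Fm
  cov := H.cov
  emb := by
    intro n V hV hne
    obtain ⟨e, h1, h2, h3⟩ := H.emb n V hV hne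
    exact ⟨e, h1, h2, fun x => ⟨(h3 x).1, (h3 x).2.2.1, (h3 x).2.1, (h3 x).2.2.2⟩⟩

/-- Approximations to the homeomorphism. -/
structure St (P A B : Set C) where
  R : Set (C × C)
  c : C → ℕ
  d : C → ℕ
  cl : IsClosed R
  il : ∀ p ∈ R, ∀ q ∈ R, p.1 = q.1 → p = q
  ir : ∀ p ∈ R, ∀ q ∈ R, p.2 = q.2 → p = q
  nice : ∀ p ∈ R, (p.1 ∈ P ↔ p.2 ∈ P)
  ab : ∀ p ∈ R, (p.1 ∈ A ↔ p.2 ∈ B)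
  fin : {p | p ∈ R ∧ p.1 ∈ A}.Finite
  hc : Continuous c
  hd : Continuous d
  cd : ∀ p ∈ R, c p.1 = d p.2
  tl : ∀ x, ∃ y, c x = d y
  tr : ∀ y, ∃ x, c x = d y

variable {P A B : Set C} {F : ℕ → Set C}

def St.dom (s : St P A B) : Set C := Prod.fst '' s.R
def St.ran (s : St P A B) : Set C := Prod.snd '' s.R

lemma St.dom_closed (s : St P A B) : IsClosed s.dom :=
  (s.cl.isCompact.image continuous_fst).isClosed
lemma St.ran_closed (s : St P A B) : IsClosed s.ran :=
  (s.cl.isCompact.image continuous_snd).isClosed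

def St.swap (s : St P A B) : St P B A where
  R := Prod.swap ⁻¹' s.R
  c := s.d
  d := s.c
  cl := s.cl.preimage continuous_swap
  il := by
    intro p hp q hq h
    exact Prod.swap_injective (s.ir _ hp _ hq h)
  ir := by
    intro p hp q hq h
    exact Prod.swap_injective (s.il _ hp _ hq h)
  nice := fun p hp => (s.nice _ hp).symm
  ab := fun p hp => (s.ab _ hp).symm
  fin := by
    refine (s.fin.image Prod.swap).subset ?_
    rintro p ⟨h1, h2⟩
    exact ⟨p.swap, ⟨h1, (s.ab _ h1).2 h2⟩, Prod.swap_swap p⟩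
  hc := s.hd
  hd := s.hc
  cd := fun p hp => (s.cd _ hp).symm
  tl := fun x => by obtain ⟨y, h⟩ := s.tr x; exact ⟨y, h.symm⟩
  tr := fun x => by obtain ⟨y, h⟩ := s.tl x; exact ⟨y, h.symm⟩

lemma St.swap_dom (s : St P A B) : s.swap.dom = s.ran := by
  ext x
  constructor
  · rintro ⟨p, hp, rfl⟩; exact ⟨p.swap, hp, rfl⟩
  · rintro ⟨p, hp, rfl⟩; exact ⟨p.swap, hp, rfl⟩
lemma St.swap_ran (s : St P A B) : s.swap.ran = s.dom := by
  ext x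
  constructor
  · rintro ⟨p, hp, rfl⟩; exact ⟨p.swap, hp, rfl⟩
  · rintro ⟨p, hp, rfl⟩; exact ⟨p.swap, hp, rfl⟩

/-- one state extends another -/
def Le (s t : St P A B) : Prop := s.R ⊆ t.R ∧ ∀ x y, t.c x = t.d y → s.c x = s.d y

lemma Le.trans {s t r : St P A B} (h : Le s t) (h' : Le t r) : Le s r :=
  ⟨h.1.trans h'.1, fun x y hh => h.2 x y (h'.2 x y hh)⟩
lemma Le.dom {s t : St P A B} (h : Le s t) : s.dom ⊆ t.dom := image_mono h.1
lemma Le.ran {s t : St P A B} (h : Le s t) : s.ran ⊆ t.ran := image_mono h.1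
lemma Le.swap {s t : St P A B} (h : Le s t) : Le s.swap t.swap :=
  ⟨preimage_mono h.1, fun x y hh => (h.2 y x hh.symm).symm⟩

lemma St.fin_ran (s : St P A B) : {y | y ∈ s.ran ∧ y ∈ B}.Finite := by
  refine (s.fin.image Prod.snd).subset ?_
  rintro y ⟨⟨p, hp, rfl⟩, hy⟩
  exact ⟨p, ⟨hp, (s.ab p hp).2 hy⟩, rfl⟩

/-- general extension by a closed set `S` -/
lemma extend (s : St P A B) (S : Set (C × C)) (hS : IsClosed S)
    (hil : ∀ p ∈ S, ∀ q ∈ S, p.1 = q.1 → p = q)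
    (hir : ∀ p ∈ S, ∀ q ∈ S, p.2 = q.2 → p = q)
    (hd : ∀ p ∈ S, p.1 ∉ s.dom) (hr : ∀ p ∈ S, p.2 ∉ s.ran)
    (hn : ∀ p ∈ S, (p.1 ∈ P ↔ p.2 ∈ P)) (hab : ∀ p ∈ S, (p.1 ∈ A ↔ p.2 ∈ B))
    (hfin : {p | p ∈ S ∧ p.1 ∈ A}.Finite) (hcd : ∀ p ∈ S, s.c p.1 = s.d p.2) :
    ∃ t : St P A B, Le s t ∧ t.c = s.c ∧ t.d = s.d ∧ t.R = s.R ∪ S := by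
  refine ⟨⟨s.R ∪ S, s.c, s.d, s.cl.union hS, ?_, ?_, ?_, ?_, ?_, s.hc, s.hd, ?_, s.tl, s.tr⟩,
    ⟨subset_union_left, fun _ _ h => h⟩, rfl, rfl, rfl⟩
  · rintro p (hp | hp) q (hq | hq) h
    · exact s.il p hp q hq h
    · exact absurd ⟨p, hp, h⟩ (hd q hq)
    · exact absurd ⟨q, hq, h.symm⟩ (hd p hp)
    · exact hil p hp q hq h
  · rintro p (hp | hp) q (hq | hq) h
    · exact s.ir p hp q hq h
    · exact absurd ⟨p, hp, h⟩ (hr q hq)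
    · exact absurd ⟨q, hq, h.symm⟩ (hr p hp)
    · exact hir p hp q hq h
  · rintro p (hp | hp)
    exacts [s.nice p hp, hn p hp]
  · rintro p (hp | hp)
    exacts [s.ab p hp, hab p hp]
  · refine (s.fin.union hfin).subset ?_
    rintro p ⟨hp | hp, h⟩
    exacts [Or.inl ⟨hp, h⟩, Or.inr ⟨hp, h⟩]
  · rintro p (hp | hp)
    exacts [s.cd p hp, hcd p hp]

/-- add one point of `A` -/
lemma addA (H : Hyp P A B F) (s : St P A B) {a : C} (ha : a ∈ A) :
    ∃ t : St P A B, Le s t ∧ t.c = s.c ∧ t.d = s.d ∧ a ∈ t.dom ∧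
      ∃ b ∈ B, t.R ⊆ s.R ∪ {(a, b)} := by
  by_cases hd : a ∈ s.dom
  · obtain ⟨p, hp, rfl⟩ := id hd
    exact ⟨s, ⟨Subset.rfl, fun _ _ h => h⟩, rfl, rfl, hd, p.2, (s.ab p hp).1 ha,
      subset_union_left⟩
  · obtain ⟨b, hb, hbV, hbS⟩ := dense_pick H.dB s.fin_ran (V := {y | s.d y = s.c a})
      ((isOpen_discrete {s.c a}).preimage s.hd)
      (by obtain ⟨y, hy⟩ := s.tl a; exact ⟨y, hy.symm⟩)
    obtain ⟨t, h1, h2, h3, h4⟩ := extend s {(a, b)} isClosed_singleton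
      (by rintro p rfl q rfl _; rfl) (by rintro p rfl q rfl _; rfl)
      (by rintro p rfl; exact hd) (by rintro p rfl h; exact hbS ⟨h, hb⟩)
      (by rintro p rfl; exact ⟨fun _ => H.BP hb, fun _ => H.AP ha⟩)
      (by rintro p rfl; exact ⟨fun _ => hb, fun _ => ha⟩)
      ((finite_singleton (a, b)).subset (by rintro p ⟨h, _⟩; exact h))
      (by rintro p rfl; exact hbV.symm)
    exact ⟨t, h1, h2, h3, ⟨(a, b), by rw [h4]; exact Or.inr rfl, rfl⟩, b, hb, h4.subset⟩

/-- new points are in finite subsets of A, B -/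
def FinExt (s t : St P A B) : Prop :=
  Le s t ∧ t.c = s.c ∧ t.d = s.d ∧ (∃ S : Set C, S.Finite ∧ S ⊆ A ∧ t.dom ⊆ s.dom ∪ S) ∧
    (∃ S : Set C, S.Finite ∧ S ⊆ B ∧ t.ran ⊆ s.ran ∪ S)

lemma FinExt.refl (s : St P A B) : FinExt s s :=
  ⟨⟨Subset.rfl, fun _ _ h => h⟩, rfl, rfl, ⟨∅, finite_empty, empty_subset _, by simp⟩,
    ⟨∅, finite_empty, empty_subset _, by simp⟩⟩

lemma FinExt.trans {s t r : St P A B} (h : FinExt s t) (h' : FinExt t r) : FinExt s r := by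
  obtain ⟨h1, h2, h3, ⟨S, a1, a2, a3⟩, ⟨T, b1, b2, b3⟩⟩ := h
  obtain ⟨h1', h2', h3', ⟨S', a1', a2', a3'⟩, ⟨T', b1', b2', b3'⟩⟩ := h'
  refine ⟨h1.trans h1', h2'.trans h2, h3'.trans h3, ⟨S ∪ S', a1.union a1', union_subset a2 a2', ?_⟩,
    ⟨T ∪ T', b1.union b1', union_subset b2 b2', ?_⟩⟩
  · rw [← union_assoc]
    exact a3'.trans (union_subset_union_left _ a3)
  · rw [← union_assoc]
    exact b3'.trans (union_subset_union_left _ b3)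

lemma FinExt.swap {s t : St P A B} (h : FinExt s t) : FinExt s.swap t.swap := by
  obtain ⟨h1, h2, h3, h4, h5⟩ := h
  refine ⟨h1.swap, h3, h2, ?_, ?_⟩
  · simpa only [St.swap_dom] using h5
  · simpa only [St.swap_ran] using h4

lemma addFin (H : Hyp P A B F) (s : St P A B) {S : Set C} (hS : S.Finite) (hSA : S ⊆ A) :
    ∃ t : St P A B, FinExt s t ∧ S ⊆ t.dom := by
  induction S, hS using Set.Finite.induction_on with
  | empty => exact ⟨s, FinExt.refl s, empty_subset _⟩
  | @insert a S _ _ ih =>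
    obtain ⟨t, h1, h2⟩ := ih ((subset_insert _ _).trans hSA)
    obtain ⟨r, g1, g2, g3, g4, b, hb, g5⟩ := addA H t (hSA (mem_insert a S))
    refine ⟨r, h1.trans ⟨g1, g2, g3, ⟨{a}, finite_singleton a, ?_, ?_⟩,
      ⟨{b}, finite_singleton b, ?_, ?_⟩⟩, ?_⟩
    · rintro x rfl; exact hSA (mem_insert _ S)
    · rintro x ⟨p, hp, rfl⟩
      rcases g5 hp with h | h
      · exact Or.inl ⟨p, h, rfl⟩
      · right; rw [mem_singleton_iff] at h; rw [h]; rfl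
    · rintro x rfl; exact hb
    · rintro x ⟨p, hp, rfl⟩
      rcases g5 hp with h | h
      · exact Or.inl ⟨p, h, rfl⟩
      · right; rw [mem_singleton_iff] at h; rw [h]; rfl
    · exact insert_subset g4 (h2.trans g1.dom)

lemma addFin' (H : Hyp P A B F) (s : St P A B) {S : Set C} (hS : S.Finite) (hSA : S ⊆ B) :
    ∃ t : St P A B, FinExt s t ∧ S ⊆ t.ran := by
  obtain ⟨t, h1, h2⟩ := addFin H.symm s.swap hS hSA
  refine ⟨t.swap, h1.swap, ?_⟩
  rwa [St.swap_ran]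

/-- finitely many points of a dense set realising all values of `u` -/
lemma reps {A : Set C} (hA : Dense A) {u : C → ℕ} (hu : Continuous u) :
    ∃ S : Set C, S.Finite ∧ S ⊆ A ∧ ∀ x, ∃ a ∈ S, u a = u x := by
  have hf : (range u).Finite := (isCompact_range hu).finite_of_discrete
  have : ∀ n, ∃ a ∈ A, n ∈ range u → u a = n := by
    intro n
    by_cases hn : n ∈ range u
    · obtain ⟨a, h1, h2⟩ := hA.inter_open_nonempty (u ⁻¹' {n}) ((isOpen_discrete {n}).preimage hu)
        (by obtain ⟨x, hx⟩ := hn; exact ⟨x, hx⟩)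
      exact ⟨a, h2, fun _ => h1⟩
    · obtain ⟨a, ha⟩ := hA.nonempty
      exact ⟨a, ha, fun h => absurd h hn⟩
  choose g hg1 hg2 using this
  refine ⟨g '' range u, hf.image g, ?_, fun x => ⟨g (u x), ⟨u x, ⟨x, rfl⟩, rfl⟩, hg2 _ ⟨x, rfl⟩⟩⟩
  rintro _ ⟨n, _, rfl⟩
  exact hg1 n

/-- refine the partitions -/
lemma refine_st (s : St P A B) {u v : C → ℕ} (hu : Continuous u) (hv : Continuous v)
    (huc : ∀ x y, u x = u y → s.c x = s.c y) (hvd : ∀ x y, v x = v y → s.d x = s.d y)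
    (hur : ∀ x, ∃ p ∈ s.R, u p.1 = u x) (hvr : ∀ x, ∃ p ∈ s.R, v p.2 = v x) :
    ∃ t : St P A B, Le s t ∧ t.R = s.R ∧ (∀ x y, t.c x = t.c y → u x = u y) ∧
      (∀ x y, t.d x = t.d y → v x = v y) := by
  have hw : Continuous (fun p : C × C => Nat.pair (u p.1) (v p.2)) := by
    have : Continuous (fun p : C × C => (u p.1, v p.2)) := by fun_prop
    exact (continuous_of_discreteTopology (f := fun q : ℕ × ℕ => Nat.pair q.1 q.2)).comp this
  obtain ⟨c, c1, c2, c3⟩ := extC s.cl s.il hw hu hur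
  obtain ⟨d, d1, d2, d3⟩ := extC (R := Prod.swap ⁻¹' s.R) s.swap.cl s.swap.il
    (hw.comp continuous_swap) hv
    (by intro x; obtain ⟨p, hp, h⟩ := hvr x; exact ⟨p.swap, hp, h⟩)
  have d2' : ∀ p ∈ s.R, d p.2 = Nat.pair (u p.1) (v p.2) := fun p hp => d2 p.swap hp
  have d3' : ∀ x, ∃ p ∈ s.R, d x = Nat.pair (u p.1) (v p.2) ∧ v p.2 = v x := by
    intro x
    obtain ⟨p, hp, h, h'⟩ := d3 x
    exact ⟨p.swap, hp, h, h'⟩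
  refine ⟨⟨s.R, c, d, s.cl, s.il, s.ir, s.nice, s.ab, s.fin, c1, d1, ?_, ?_, ?_⟩, ⟨Subset.rfl, ?_⟩,
    rfl, ?_, ?_⟩
  · intro p hp
    rw [c2 p hp, d2' p hp]
  · intro x
    obtain ⟨p, hp, h, -⟩ := c3 x
    exact ⟨p.2, h.trans (d2' p hp).symm⟩
  · intro x
    obtain ⟨p, hp, h, -⟩ := d3' x
    exact ⟨p.1, (c2 p hp).trans h.symm⟩
  · intro x y hxy
    simp only at hxy
    obtain ⟨p, hp, h1, h2⟩ := c3 x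
    obtain ⟨q, hq, h3, h4⟩ := d3' y
    rw [h1, h3] at hxy
    obtain ⟨e1, e2⟩ := Nat.pair_eq_pair.1 hxy
    rw [← huc _ _ h2, huc _ _ e1, s.cd q hq, hvd _ _ h4]
  · intro x y hxy
    simp only at hxy
    obtain ⟨p, hp, h1, h2⟩ := c3 x
    obtain ⟨q, hq, h3, h4⟩ := c3 y
    rw [h1, h3] at hxy
    obtain ⟨e1, e2⟩ := Nat.pair_eq_pair.1 hxy
    rw [← h2, e1, h4]
  · intro x y hxy
    simp only at hxy
    obtain ⟨p, hp, h1, h2⟩ := d3' x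
    obtain ⟨q, hq, h3, h4⟩ := d3' y
    rw [h1, h3] at hxy
    obtain ⟨e1, e2⟩ := Nat.pair_eq_pair.1 hxy
    rw [← h2, e2, h4]

def G2 (Fn M M' : Set C) (k' : ℕ) : Prop := ∀ x ∈ Fn, ∀ z ∈ M', z ∉ M → ¬ near k' x z
def GT (Fn M : Set C) (k : ℕ) (M' : Set C) (k' : ℕ) : Prop :=
  ∀ x ∈ Fn, x ∉ M' → (∃ z ∈ M, near k x z) ∧ ∀ z ∈ M', z ∉ M → ¬ near k' x z

lemma G2.mono {Fn M M' : Set C} {k l : ℕ} (h : G2 Fn M M' k) (hkl : k ≤ l) : G2 Fn M M' l :=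
  fun x hx z hz hzM hn => h x hx z hz hzM (near_mono hkl hn)

lemma G2_of {Fn M M' Q : Set C} (hF : IsClosed Fn) (hQ : IsClosed Q) (h : ∀ x ∈ Q, x ∉ Fn)
    (hM : M' ⊆ M ∪ Q) : ∃ k, G2 Fn M M' k := by
  obtain ⟨k, hk⟩ := exists_sep hF hQ (fun x h1 h2 => h x h2 h1)
  exact ⟨k, fun x hx z hz hzM => hk x hx z ((hM hz).resolve_left hzM)⟩

lemma G2.trans {Fn M M' M'' : Set C} {k l : ℕ} (h : G2 Fn M M' k) (h' : G2 Fn M' M'' l)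
    (hkl : k ≤ l) : G2 Fn M M'' l := by
  intro x hx z hz hzM hn
  by_cases hz' : z ∈ M'
  · exact h x hx z hz' hzM (near_mono hkl hn)
  · exact h' x hx z hz hz' hn

lemma GT.g2 {Fn M M' M'' : Set C} {k l m : ℕ} (h : GT Fn M k M' l) (h' : G2 Fn M' M'' m)
    (hlm : l ≤ m) (hM : M' ⊆ M'') : GT Fn M k M'' m := by
  intro x hx hxM
  obtain ⟨h1, h2⟩ := h x hx (fun hh => hxM (hM hh))
  refine ⟨h1, fun z hz hzM hn => ?_⟩
  by_cases hz' : z ∈ M'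
  · exact h2 z hz' hzM (near_mono hlm hn)
  · exact h' x hx z hz hz' hn

lemma G2.gt {Fn M M' M'' : Set C} {k l m : ℕ} (h : G2 Fn M M' l) (h' : GT Fn M' l M'' m)
    (hkl : k ≤ l) (hlm : l ≤ m) : GT Fn M k M'' m := by
  intro x hx hxM
  obtain ⟨⟨z, hz, hn⟩, h2⟩ := h' x hx hxM
  refine ⟨⟨z, by_contra fun hzM => h x hx z hz hzM hn, near_mono hkl hn⟩, ?_⟩
  intro z hz hzM hn
  by_cases hz' : z ∈ M'
  · exact h x hx z hz' hzM (near_mono hlm hn)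
  · exact h2 z hz hz' hn

lemma half (H : Hyp P A B F) (n k : ℕ) (s : St P A B) :
    ∃ (t : St P A B) (k' : ℕ), Le s t ∧ k ≤ k' ∧ GT (F n) s.dom k t.dom k' ∧
      G2 (F n) s.ran t.ran k' := by
  have hemb : ∀ i, ∃ e : C → C, Continuous e ∧ Function.Injective e ∧ (i ∈ range s.c →
      ∀ x, (s.d (e x) = i ∧ e x ∉ s.ran) ∧ e x ∉ A ∧ e x ∉ B ∧ e x ∉ F n ∧ (x ∈ P ↔ e x ∈ P)) := by
    intro i
    by_cases hi : i ∈ range s.c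
    · have hdo : IsOpen {y | s.d y = i} := (isOpen_discrete {i}).preimage s.hd
      obtain ⟨b, hb, hbV, hbS⟩ := dense_pick H.dB s.fin_ran hdo
        (by obtain ⟨x, rfl⟩ := hi; obtain ⟨y, hy⟩ := s.tl x; exact ⟨y, hy.symm⟩)
      obtain ⟨e, h1, h2, h3⟩ := H.emb n ({y | s.d y = i} ∩ s.ranᶜ)
        (hdo.inter s.ran_closed.isOpen_compl) ⟨b, hbV, fun h => hbS ⟨h, hb⟩⟩
      exact ⟨e, h1, h2, fun _ => h3⟩
    · exact ⟨id, continuous_id, Function.injective_id, fun h => absurd h hi⟩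
  choose e' he1 he2 he3 using hemb
  let e : C → C := fun x => e' (s.c x) x
  have hec : Continuous e := by
    have h1 : Continuous (fun q : ℕ × C => e' q.1 q.2) :=
      continuous_prod_of_discrete_left.2 he1
    exact h1.comp (s.hc.prodMk continuous_id)
  have hep := fun x => he3 (s.c x) ⟨x, rfl⟩ x
  have hei : Function.Injective e := by
    intro x y hxy
    have h1 : s.c x = s.c y := by
      rw [← (hep x).1.1, ← (hep y).1.1]
      exact congrArg s.d hxy
    refine he2 (s.c x) ?_
    change e' (s.c x) x = e' (s.c y) y at hxy
    rw [hxy, h1]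
  let E : Set C := {x | x ∈ F n ∧ ∀ z ∈ s.dom, ¬ near k x z}
  have hE : IsClosed E := by
    have : E = F n ∩ ⋂ z ∈ s.dom, {x | near k x z}ᶜ := by
      ext x; simp [E]
    rw [this]
    exact (H.Fc n).inter (isClosed_biInter fun z _ =>
      (isOpen_near continuous_id continuous_const k).isClosed_compl)
  obtain ⟨t, t1, t2, t3, t4⟩ := extend s {p | p.1 ∈ E ∧ p.2 = e p.1}
    ((hE.preimage continuous_fst).inter (isClosed_eq continuous_snd (hec.comp continuous_fst)))
    (by
      rintro ⟨a, b⟩ ⟨hp, hp'⟩ ⟨a', b'⟩ ⟨hq, hq'⟩ h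
      simp only at hp' hq' h
      subst h; subst hp'; subst hq'; rfl)
    (by
      rintro ⟨a, b⟩ ⟨hp, hp'⟩ ⟨a', b'⟩ ⟨hq, hq'⟩ h
      simp only at hp' hq' h
      have := hei (hp'.symm.trans (h.trans hq'))
      subst this; subst h; rfl)
    (by rintro p ⟨hp, hp'⟩ h; exact hp.2 _ h (near_refl _ _))
    (by rintro p ⟨hp, hp'⟩ h; rw [hp'] at h; exact (hep _).1.2 h)
    (by rintro p ⟨hp, hp'⟩; rw [hp']; exact (hep _).2.2.2.2)
    (by
      rintro p ⟨hp, hp'⟩; rw [hp']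
      exact ⟨fun h => absurd hp.1 (H.AF n _ h), fun h => absurd h (hep _).2.2.1⟩)
    (by
      convert finite_empty using 1
      rw [eq_empty_iff_forall_notMem]
      rintro p ⟨⟨hp, _⟩, h⟩
      exact H.AF n _ h hp.1)
    (by rintro p ⟨hp, hp'⟩; rw [hp']; exact (hep _).1.1.symm)
  have hran : t.ran ⊆ s.ran ∪ e '' E := by
    rintro y ⟨p, hp, rfl⟩
    rw [t4] at hp
    rcases hp with hp | hp
    · exact Or.inl ⟨p, hp, rfl⟩
    · exact Or.inr ⟨p.1, hp.1, hp.2.symm⟩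
  obtain ⟨l, hl⟩ := G2_of (H.Fc n) (hE.isCompact.image hec).isClosed
    (by rintro _ ⟨x, _, rfl⟩; exact (hep x).2.2.2.1) hran
  refine ⟨t, max k l, t1, le_max_left _ _, ?_, hl.mono (le_max_right _ _)⟩
  intro x hx hxt
  have hxE : x ∉ E := by
    intro h
    exact hxt ⟨(x, e x), by rw [t4]; exact Or.inr ⟨h, rfl⟩, rfl⟩
  have hz : ∃ z ∈ s.dom, near k x z := by
    by_contra hcon
    push Not at hcon
    exact hxE ⟨hx, hcon⟩
  refine ⟨hz, ?_⟩
  rintro _ ⟨p, hp, rfl⟩ hps hn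
  rw [t4] at hp
  rcases hp with hp | hp
  · exact hps ⟨p, hp, rfl⟩
  · obtain ⟨z, hz, hzn⟩ := hz
    exact hp.1.2 z hz (near_trans (near_symm (near_mono (le_max_left _ _) hn)) hzn)

lemma FinExt.g2 (H : Hyp P A B F) {s t : St P A B} (h : FinExt s t) (n : ℕ) :
    ∃ k, G2 (F n) s.dom t.dom k ∧ G2 (F n) s.ran t.ran k := by
  obtain ⟨-, -, -, ⟨S, a1, a2, a3⟩, ⟨T, b1, b2, b3⟩⟩ := h
  obtain ⟨k, hk⟩ := G2_of (H.Fc n) a1.isClosed (fun x hx => H.AF n x (a2 hx)) a3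
  obtain ⟨l, hl⟩ := G2_of (H.Fc n) b1.isClosed (fun x hx => H.BF n x (b2 hx)) b3
  exact ⟨max k l, hk.mono (le_max_left _ _), hl.mono (le_max_right _ _)⟩

/-- properties of one full step -/
structure Step (F : ℕ → Set C) (n : ℕ) (a b : C) (s : St P A B) (k : ℕ) (t : St P A B) (l : ℕ) :
    Prop where
  le : Le s t
  kl : k ≤ l
  nl : n ≤ l
  gd : GT (F n) s.dom k t.dom l
  gr : GT (F n) s.ran k t.ran l
  ha : a ∈ t.dom
  hb : b ∈ t.ran
  cn : ∀ x y, t.c x = t.c y → near n x y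
  dn : ∀ x y, t.d x = t.d y → near n x y

lemma step (H : Hyp P A B F) (n : ℕ) {a b : C} (ha : a ∈ A) (hb : b ∈ B) (s : St P A B) (k : ℕ) :
    ∃ (t : St P A B) (l : ℕ), Step F n a b s k t l := by
  obtain ⟨s1, k1, le1, hk1, gd1, gr1⟩ := half H n k s
  obtain ⟨s2', k2, le2', hk2, gd2, gr2⟩ := half H.symm n k1 s1.swap
  have le2 : Le s1 s2'.swap := le2'.swap
  rw [← St.swap_ran s2', St.swap_dom] at gd2
  rw [← St.swap_dom s2', St.swap_ran] at gr2
  generalize s2'.swap = s2 at le2 gd2 gr2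
  have gdd : GT (F n) s.dom k s2.dom k2 := gd1.g2 gr2 hk2 le2.dom
  have grr : GT (F n) s.ran k s2.ran k2 := gr1.gt gd2 hk1 hk2
  obtain ⟨u, hu, hu'⟩ := exU s2.hc n
  obtain ⟨v, hv, hv'⟩ := exU s2.hd n
  obtain ⟨S, S1, S2, S3⟩ := reps H.dA hu
  obtain ⟨T, T1, T2, T3⟩ := reps H.dB hv
  obtain ⟨s3, f3, h3⟩ := addFin H s2 (S1.insert a) (insert_subset ha S2)
  obtain ⟨s4, f4, h4⟩ := addFin' H s3 (T1.insert b) (insert_subset hb T2)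
  have f24 := f3.trans f4
  obtain ⟨k4, gd4, gr4⟩ := f24.g2 H n
  have hS4 : insert a S ⊆ s4.dom := h3.trans f4.1.dom
  obtain ⟨s5, le5, R5, c5, d5⟩ := refine_st s4 hu hv
    (by rw [f24.2.1]; exact fun x y h => (hu' x y h).2)
    (by rw [f24.2.2.1]; exact fun x y h => (hv' x y h).2)
    (by
      intro x
      obtain ⟨a', ha', h⟩ := S3 x
      obtain ⟨p, hp, rfl⟩ := hS4 (mem_insert_of_mem a ha')
      exact ⟨p, hp, h⟩)
    (by
      intro x
      obtain ⟨a', ha', h⟩ := T3 x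
      obtain ⟨p, hp, rfl⟩ := h4 (mem_insert_of_mem b ha')
      exact ⟨p, hp, h⟩)
  have hd5 : s5.dom = s4.dom := by unfold St.dom; rw [R5]
  have hr5 : s5.ran = s4.ran := by unfold St.ran; rw [R5]
  refine ⟨s5, max n (max k2 k4), le1.trans (le2.trans (f24.1.trans le5)), by omega, by omega,
    ?_, ?_, ?_, ?_, ?_, ?_⟩
  · rw [hd5]
    exact gdd.g2 (gd4.mono (by omega)) (by omega) f24.1.dom
  · rw [hr5]
    exact grr.g2 (gr4.mono (by omega)) (by omega) f24.1.ran
  · rw [hd5]; exact hS4 (mem_insert _ _)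
  · rw [hr5]; exact h4 (mem_insert _ _)
  · exact fun x y h => (hu' x y (c5 x y h)).1
  · exact fun x y h => (hv' x y (d5 x y h)).1

def St.init (P A B : Set C) : St P A B where
  R := ∅
  c := fun _ => 0
  d := fun _ => 0
  cl := isClosed_empty
  il := by simp
  ir := by simp
  nice := by simp
  ab := by simp
  fin := by simp
  hc := continuous_const
  hd := continuous_const
  cd := by simp
  tl := fun x => ⟨x, rfl⟩
  tr := fun x => ⟨x, rfl⟩

/-- everything in the `F m` is eventually treated -/
lemma treated {F : ℕ → Set C} (Fm : Monotone F) {M : ℕ → Set C} {k : ℕ → ℕ}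
    (hM : ∀ n, IsClosed (M n)) (hk : Monotone k) (hkn : ∀ n, n ≤ k (n + 1))
    (hG : ∀ n, GT (F n) (M n) (k n) (M (n + 1)) (k (n + 1))) {m : ℕ} {x : C} (hx : x ∈ F m) :
    ∃ n, x ∈ M n := by
  by_contra hcon
  push Not at hcon
  have key : ∀ n, m ≤ n → ∀ z ∈ M n, near (k n) x z → z ∈ M m := by
    intro n hn
    induction n, hn using Nat.le_induction with
    | base => exact fun z hz _ => hz
    | succ n hn ih =>
      intro z hz hzn
      by_cases hzM : z ∈ M n
      · exact ih z hzM (near_mono (hk n.le_succ) hzn)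
      · exact absurd hzn ((hG n x (Fm hn hx) (hcon _)).2 z hz hzM)
  apply hcon m
  rw [← (hM m).closure_eq, mem_closure_iff]
  intro V hV hxV
  obtain ⟨l, hl⟩ := exists_nhd hV hxV
  have h1 : m ≤ max m l + 1 := by omega
  obtain ⟨⟨z, hz, hzn⟩, -⟩ := hG (max m l + 1) x (Fm h1 hx) (hcon _)
  refine ⟨z, hl z (near_mono ?_ hzn), key _ h1 z hz hzn⟩
  have := hkn (max m l)
  omega

theorem main (H : Hyp P A B F) (cA : A.Countable) (cB : B.Countable) :
    ∃ h : C ≃ₜ C, (∀ x, x ∈ P ↔ h x ∈ P) ∧ h '' A = B := by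
  obtain ⟨α, hα⟩ := cA.exists_eq_range H.dA.nonempty
  obtain ⟨β, hβ⟩ := cB.exists_eq_range H.dB.nonempty
  have hst : ∀ (n : ℕ) (q : St P A B × ℕ), ∃ q' : St P A B × ℕ,
      Step F n (α n) (β n) q.1 q.2 q'.1 q'.2 := by
    intro n q
    obtain ⟨t, l, h⟩ := step H n (a := α n) (b := β n) (hα ▸ mem_range_self n)
      (hβ ▸ mem_range_self n) q.1 q.2
    exact ⟨(t, l), h⟩
  choose g hg using hst
  let σ : ℕ → St P A B × ℕ := fun n => Nat.rec (St.init P A B, 0) (fun n q => g n q) n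
  have hσ : ∀ n, Step F n (α n) (β n) (σ n).1 (σ n).2 (σ (n + 1)).1 (σ (n + 1)).2 :=
    fun n => hg n (σ n)
  generalize σ = σ at hσ
  have hle : ∀ {m n}, m ≤ n → Le (σ m).1 (σ n).1 := by
    intro m n hmn
    induction n, hmn using Nat.le_induction with
    | base => exact ⟨Subset.rfl, fun _ _ h => h⟩
    | succ n hn ih => exact ih.trans (hσ n).le
  have hk : Monotone (fun n => (σ n).2) := monotone_nat_of_le_succ fun n => (hσ n).kl
  have tdom : ∀ m, ∀ x ∈ F m, ∃ n, x ∈ (σ n).1.dom := fun m x hx =>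
    treated H.Fm (fun n => (σ n).1.dom_closed) hk (fun n => (hσ n).nl) (fun n => (hσ n).gd) hx
  have tran : ∀ m, ∀ x ∈ F m, ∃ n, x ∈ (σ n).1.ran := fun m x hx =>
    treated H.Fm (fun n => (σ n).1.ran_closed) hk (fun n => (hσ n).nl) (fun n => (hσ n).gr) hx
  -- the graph
  let Γ : C → C → Prop := fun x y => ∀ n, (σ n).1.c x = (σ n).1.d y
  have ΓR : ∀ n, ∀ p ∈ (σ n).1.R, Γ p.1 p.2 := by
    intro n p hp m
    exact (hle (le_max_left m n)).2 _ _ ((σ (max m n)).1.cd p ((hle (le_max_right m n)).1 hp))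
  have ex1 : ∀ x, ∃ y, Γ x y := by
    intro x
    have := IsCompact.nonempty_iInter_of_sequence_nonempty_isCompact_isClosed
      (fun n => {y | (σ n).1.d y = (σ n).1.c x})
      (fun n y hy => ((hσ n).le.2 x y hy.symm).symm)
      (fun n => by obtain ⟨y, hy⟩ := (σ n).1.tl x; exact ⟨y, hy.symm⟩)
      (isClosed_eq (σ 0).1.hd continuous_const).isCompact
      (fun n => isClosed_eq (σ n).1.hd continuous_const)
    obtain ⟨y, hy⟩ := this
    exact ⟨y, fun n => (mem_iInter.1 hy n).symm⟩
  have ex2 : ∀ y, ∃ x, Γ x y := by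
    intro y
    have := IsCompact.nonempty_iInter_of_sequence_nonempty_isCompact_isClosed
      (fun n => {x | (σ n).1.c x = (σ n).1.d y})
      (fun n x hx => (hσ n).le.2 x y hx)
      (fun n => by obtain ⟨x, hx⟩ := (σ n).1.tr y; exact ⟨x, hx⟩)
      (isClosed_eq (σ 0).1.hc continuous_const).isCompact
      (fun n => isClosed_eq (σ n).1.hc continuous_const)
    obtain ⟨x, hx⟩ := this
    exact ⟨x, fun n => mem_iInter.1 hx n⟩
  have un1 : ∀ {x y y'}, Γ x y → Γ x y' → y = y' := fun h h' =>
    eq_of_near fun n => ⟨n, le_rfl, (hσ n).dn _ _ ((h (n + 1)).symm.trans (h' (n + 1)))⟩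
  have un2 : ∀ {x x' y}, Γ x y → Γ x' y → x = x' := fun h h' =>
    eq_of_near fun n => ⟨n, le_rfl, (hσ n).cn _ _ ((h (n + 1)).trans (h' (n + 1)).symm)⟩
  choose f hf using ex1
  choose f' hf' using ex2
  let e : C ≃ C := ⟨f, f', fun x => un2 (hf' _) (hf x), fun y => un1 (hf _) (hf' y)⟩
  have hfc : Continuous f := by
    rw [continuous_iff_continuousAt]
    intro x V hV
    obtain ⟨W, hWV, hW, hxW⟩ := mem_nhds_iff.1 hV
    obtain ⟨l, hl⟩ := exists_nhd hW hxW
    have : {x' | (σ (l + 1)).1.c x' = (σ (l + 1)).1.c x} ∈ 𝓝 x :=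
      ((isOpen_discrete {(σ (l + 1)).1.c x}).preimage (σ (l + 1)).1.hc).mem_nhds rfl
    refine Filter.mem_map.2 <| Filter.mem_of_superset this fun x' hx' => hWV (hl _ ((hσ l).dn _ _ ?_))
    exact (hf x (l + 1)).symm.trans (Eq.trans (Eq.symm hx') (hf x' (l + 1)))
  let h : C ≃ₜ C := Continuous.homeoOfEquivCompactToT2 (f := e) hfc
  have hh : ∀ x, h x = f x := fun _ => rfl
  have hR : ∀ n, ∀ p ∈ (σ n).1.R, h p.1 = p.2 := fun n p hp => un1 (hf _) (ΓR n p hp)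
  have nic : ∀ n, ∀ x ∈ (σ n).1.dom, (x ∈ P ↔ h x ∈ P) ∧ (x ∈ A ↔ h x ∈ B) := by
    rintro n _ ⟨p, hp, rfl⟩
    rw [hR n p hp]
    exact ⟨(σ n).1.nice p hp, (σ n).1.ab p hp⟩
  have domran : ∀ n x, h x ∈ (σ n).1.ran → x ∈ (σ n).1.dom := by
    rintro n x ⟨p, hp, hpx⟩
    have : p.1 = x := h.injective ((hR n p hp).trans hpx)
    exact ⟨p, hp, this⟩
  refine ⟨h, ?_, ?_⟩
  · intro x
    by_cases h1 : ∃ n, x ∈ (σ n).1.dom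
    · obtain ⟨n, hn⟩ := h1
      exact (nic n x hn).1
    · have hx : x ∈ P := by
        by_contra hx
        obtain ⟨m, hm⟩ := H.cov x hx
        exact h1 (tdom m x hm)
      have hhx : h x ∈ P := by
        by_contra hx
        obtain ⟨m, hm⟩ := H.cov _ hx
        obtain ⟨n, hn⟩ := tran m _ hm
        exact h1 ⟨n, domran n x hn⟩
      exact ⟨fun _ => hhx, fun _ => hx⟩
  · ext y
    constructor
    · rintro ⟨x, hx, rfl⟩
      obtain ⟨n, rfl⟩ := hα ▸ hx
      exact (nic _ _ (hσ n).ha).2.1 hx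
    · intro hy
      obtain ⟨x, rfl⟩ := h.surjective y
      obtain ⟨n, hn⟩ := hβ ▸ hy
      have := (hσ n).hb
      rw [hn] at this
      exact ⟨x, (nic _ _ (domran _ _ this)).2.2 hy, rfl⟩

/-- countable sets are relatively Gδ -/
lemma lam_gdelta {Y D S : Set (ℕ → Bool)} (hY : IsLambdaPrimeSet Y) (hD : D.Countable)
    (hS : S.Countable) (hSD : S ⊆ Y ∪ D) :
    ∃ V : ℕ → Set (ℕ → Bool), (∀ n, IsOpen (V n)) ∧ S ⊆ ⋂ n, V n ∧
      ∀ x ∈ Y ∪ D, x ∈ ⋂ n, V n → x ∈ S := by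
  have h := hY D hD (Subtype.val ⁻¹' S) (hS.preimage Subtype.val_injective)
  obtain ⟨f, hf, hS'⟩ := isGδ_iff_eq_iInter_nat.1 h
  choose V hV hVf using fun n => isOpen_induced_iff.1 (hf n)
  have key : ∀ x (hx : x ∈ Y ∪ D), x ∈ ⋂ n, V n ↔ x ∈ S := by
    intro x hx
    have h1 : (⟨x, hx⟩ : ↥(Y ∪ D)) ∈ (Subtype.val ⁻¹' S : Set ↥(Y ∪ D)) ↔
      (⟨x, hx⟩ : ↥(Y ∪ D)) ∈ ⋂ n, f n := by rw [hS']
    rw [mem_preimage, mem_iInter] at h1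
    rw [h1, mem_iInter]
    refine forall_congr' fun n => ?_
    rw [← hVf n]
    rfl
  exact ⟨V, hV, fun x hx => (key x (hSD hx)).2 hx, fun x hx hx' => (key x hx).1 hx'⟩

def evc (t : Bool) : Set (ℕ → Bool) := range (fun l : List Bool => fun i => l.getD i t)

lemma evc_countable (t : Bool) : (evc t).Countable := countable_range _

lemma exists_cyl {V : Set (ℕ → Bool)} (hV : IsOpen V) {x : ℕ → Bool} (hx : x ∈ V) :
    ∃ k, ∀ y, (∀ j < k, x j = y j) → y ∈ V := by
  have h1 : IsOpen {z : C | z 0 ∈ V} := hV.preimage (continuous_apply 0)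
  obtain ⟨k, hk⟩ := exists_nhd h1 (x := fun _ => x) hx
  exact ⟨k, fun y hy => hk (fun _ => y) fun i _ j hj => hy j hj⟩

lemma evc_dense (t : Bool) : Dense (evc t) := by
  intro x
  rw [mem_closure_iff]
  intro V hV hx
  obtain ⟨k, hk⟩ := exists_cyl hV hx
  refine ⟨_, hk _ ?_, ⟨List.ofFn (fun i : Fin k => x i), rfl⟩⟩
  intro j hj
  simp [List.getD, hj]

lemma evc_disj {x : ℕ → Bool} (h : x ∈ evc true) (h' : x ∈ evc false) : False := by
  obtain ⟨l, rfl⟩ := h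
  obtain ⟨m, hm⟩ := h'
  have := congrFun hm (max l.length m.length)
  simp [List.getD] at this

lemma compl_dense {Y D : Set (ℕ → Bool)} (hY : IsLambdaPrimeSet Y) (hD : D.Countable) :
    Dense (Y ∪ D)ᶜ := by
  rw [← interior_eq_empty_iff_dense_compl, eq_empty_iff_forall_notMem]
  intro x hx
  have hO : IsOpen (interior (Y ∪ D)) := isOpen_interior
  have hsub : interior (Y ∪ D) ⊆ Y ∪ D := interior_subset
  generalize interior (Y ∪ D) = O at *
  have claim : ∀ t, ∃ W : ℕ → Set (ℕ → Bool), (∀ n, IsOpen (W n)) ∧ (∀ n, Dense (W n)) ∧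
      ∀ y ∈ O, y ∈ ⋂ n, W n → y ∈ evc t := by
    intro t
    obtain ⟨V, hV, h1, h2⟩ := lam_gdelta hY hD ((evc_countable t).mono inter_subset_left)
      (S := evc t ∩ O) (inter_subset_right.trans hsub)
    refine ⟨fun n => V n ∪ (closure O)ᶜ, fun n => (hV n).union isClosed_closure.isOpen_compl,
      fun n => ?_, ?_⟩
    · rw [dense_iff_inter_open]
      intro U hU hUne
      by_cases h : (U ∩ O).Nonempty
      · obtain ⟨z, hz, hz'⟩ := (evc_dense t).inter_open_nonempty _ (hU.inter hO) h
        exact ⟨z, hz.1, Or.inl (mem_iInter.1 (h1 ⟨hz', hz.2⟩) n)⟩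
      · obtain ⟨z, hz⟩ := hUne
        refine ⟨z, hz, Or.inr fun hzc => h ?_⟩
        exact mem_closure_iff.1 hzc U hU hz
    · intro y hy hyW
      refine (h2 y (hsub hy) (mem_iInter.2 fun n => ?_)).1
      exact (mem_iInter.1 hyW n).resolve_right fun h => h (subset_closure hy)
  obtain ⟨W, W1, W2, W3⟩ := claim true
  obtain ⟨W', W1', W2', W3'⟩ := claim false
  have d1 : Dense (⋂ n, W n) := dense_iInter_of_isOpen W1 W2
  have d2 : Dense (⋂ n, W' n) := dense_iInter_of_isOpen W1' W2'
  have d3 := d1.inter_of_Gδ (IsGδ.iInter_of_isOpen W1) (IsGδ.iInter_of_isOpen W1') d2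
  obtain ⟨z, hz, hz', hz''⟩ := d3.inter_open_nonempty O hO ⟨x, hx⟩
  exact evc_disj (W3 z hz hz') (W3' z hz hz'')

lemma mkHyp {Y : Set (ℕ → Bool)} (hY : IsLambdaPrimeSet Y) {A B : Set C} (cA : A.Countable)
    (cB : B.Countable) (dA : Dense A) (dB : Dense B) (AP : ∀ x ∈ A, ∀ i, x i ∈ Yᶜ)
    (BP : ∀ x ∈ B, ∀ i, x i ∈ Yᶜ) : ∃ F, Hyp {x : C | ∀ i, x i ∈ Yᶜ} A B F := by
  let D : Set (ℕ → Bool) := ⋃ x ∈ A ∪ B, range x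
  have hD : D.Countable := (cA.union cB).biUnion fun x _ => countable_range x
  have hDY : ∀ x ∈ D, x ∉ Y := by
    intro x hx
    obtain ⟨z, hz, i, rfl⟩ := mem_iUnion₂.1 hx
    rcases hz with hz | hz
    exacts [AP z hz i, BP z hz i]
  obtain ⟨Q, hQ1, hQ2, hQ3⟩ := (compl_dense hY hD).exists_countable_dense_subset
  obtain ⟨V, hV, h1, h2⟩ := lam_gdelta hY (hD.union hQ2) (hD.union hQ2) subset_union_right
  have hVY : ∀ x ∈ ⋂ n, V n, x ∉ Y := by
    intro x hx hxY
    rcases h2 x (Or.inl hxY) hx with h | h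
    · exact hDY x h hxY
    · exact hQ1 h (Or.inl hxY)
  have hAD : ∀ x ∈ A ∪ B, ∀ i, x i ∈ D := fun x hx i => mem_iUnion₂.2 ⟨x, hx, i, rfl⟩
  have hABF : ∀ x : C, ∀ n, (∀ i ≤ n, x i ∈ D ∪ Q) → ¬ ∃ i ≤ n, ∃ m ≤ n, x i ∉ V m := by
    rintro x n hx ⟨i, hi, m, _, h⟩
    exact h (mem_iInter.1 (h1 (hx i hi)) m)
  refine ⟨fun n => {x : C | ∃ i ≤ n, ∃ m ≤ n, x i ∉ V m}, dA, dB, AP, BP, ?_, ?_, ?_, ?_, ?_, ?_⟩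
  · exact fun n x hx => hABF x n fun i _ => Or.inl (hAD x (Or.inl hx) i)
  · exact fun n x hx => hABF x n fun i _ => Or.inl (hAD x (Or.inr hx) i)
  · intro n
    have : {x : C | ∃ i ≤ n, ∃ m ≤ n, x i ∉ V m} =
        ⋃ i ∈ {i | i ≤ n}, ⋃ m ∈ {m | m ≤ n}, {x : C | x i ∈ V m}ᶜ := by
      ext x; simp
    rw [this]
    refine (Set.finite_le_nat n).isClosed_biUnion fun i _ =>
      (Set.finite_le_nat n).isClosed_biUnion fun m _ => ?_
    exact ((hV m).preimage (continuous_apply i)).isClosed_compl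
  · rintro n n' hn x ⟨i, hi, m, hm, h⟩
    exact ⟨i, hi.trans hn, m, hm.trans hn, h⟩
  · intro x hx
    have hx' : ∃ i, x i ∈ Y := by
      by_contra hcon
      push Not at hcon
      exact hx hcon
    obtain ⟨i, hi⟩ := hx'
    have : ∃ m, x i ∉ V m := by
      by_contra hcon
      push Not at hcon
      exact hVY _ (mem_iInter.2 hcon) hi
    obtain ⟨m, hm⟩ := this
    exact ⟨max i m, i, le_max_left _ _, m, le_max_right _ _, hm⟩
  · rintro n U hU ⟨v, hv⟩
    obtain ⟨k, hk⟩ := exists_nhd hU hv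
    have hp : ∀ i, ∃ p ∈ Q, ∀ j < k, v i j = p j := by
      intro i
      have ho : IsOpen {p : ℕ → Bool | near k (fun _ => v i) (fun _ => p)} :=
        isOpen_near (by fun_prop) (by fun_prop) k
      obtain ⟨p, hp, hpQ⟩ := hQ3.inter_open_nonempty _ ho ⟨v i, near_refl _ _⟩
      exact ⟨p, hpQ, fun j hj => hp 0 (by omega) j hj⟩
    choose p hpQ hpv using hp
    let m := max k (n + 1)
    let e : C → C := fun x i => if i < m then p i else x (i - m)
    have hlt : ∀ x i, i < m → e x i = p i := fun x i hi => if_pos hi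
    have hge : ∀ x i, e x (i + m) = x i := by
      intro x i
      simp [e]
    have h0 : ∀ x, e x ∉ A ∪ B := by
      intro x hx
      have := hAD _ hx 0
      rw [hlt x 0 (by omega)] at this
      exact hQ1 (hpQ 0) (Or.inr this)
    refine ⟨e, ?_, ?_, fun x => ⟨hk _ ?_, fun h => h0 x (Or.inl h), fun h => h0 x (Or.inr h),
      hABF _ _ ?_, ?_, ?_⟩⟩
    · refine continuous_pi fun i => ?_
      by_cases hi : i < m
      · simp only [e, hi, if_true]; exact continuous_const
      · simp only [e, hi, if_false]; exact continuous_apply _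
    · intro x y hxy
      funext i
      rw [← hge x i, ← hge y i, hxy]
    · intro i hi j hj
      rw [hlt x i (by omega)]
      exact hpv i j hj
    · intro i hi
      rw [hlt x i (by omega)]
      exact Or.inr (hpQ i)
    · intro hx i
      by_cases hi : i < m
      · rw [hlt x i hi]
        exact fun h => hQ1 (hpQ i) (Or.inl h)
      · simp only [e, hi, if_false]
        exact hx _
    · intro hx i
      rw [← hge x i]
      exact hx _

end LamCDH

open LamCDH in
theorem statement18 (Y : Set (ℕ → Bool)) (hY : IsLambdaPrimeSet Y) :
    IsCDH (ℕ → ↥(Yᶜ)) := by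
  intro A B cA dA cB dB
  let ι : (ℕ → ↥(Yᶜ)) → C := fun x i => (x i).1
  have hιc : Continuous ι := by fun_prop
  have hιi : Function.Injective ι := by
    intro x y h
    funext i
    exact Subtype.ext (congrFun h i)
  have hY' : Dense Yᶜ := by
    have := compl_dense hY Set.countable_empty
    rwa [Set.union_empty] at this
  have hιd : DenseRange ι := by
    intro x
    rw [mem_closure_iff]
    intro V hV hx
    obtain ⟨k, hk⟩ := exists_nhd hV hx
    have hp : ∀ i, ∃ p ∈ Yᶜ, ∀ j < k, x i j = p j := by
      intro i
      have ho : IsOpen {p : ℕ → Bool | near k (fun _ => x i) (fun _ => p)} :=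
        isOpen_near (by fun_prop) (by fun_prop) k
      obtain ⟨p, hp, hpQ⟩ := hY'.inter_open_nonempty _ ho ⟨x i, near_refl _ _⟩
      exact ⟨p, hpQ, fun j hj => hp 0 (by omega) j hj⟩
    choose p hpY hpv using hp
    exact ⟨p, hk _ fun i _ j hj => hpv i j hj, ⟨fun i => ⟨p i, hpY i⟩, rfl⟩⟩
  obtain ⟨F, H⟩ := mkHyp hY (cA.image ι) (cB.image ι) (hιd.dense_image hιc dA)
    (hιd.dense_image hιc dB) (by rintro _ ⟨x, _, rfl⟩ i; exact (x i).2)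
    (by rintro _ ⟨x, _, rfl⟩ i; exact (x i).2)
  obtain ⟨h, hP, hAB⟩ := main H (cA.image ι) (cB.image ι)
  have hP' : ∀ x, (∀ i, x i ∈ Yᶜ) → ∀ i, h.symm x i ∈ Yᶜ := by
    intro x hx
    refine (hP (h.symm x)).2 ?_
    rw [h.apply_symm_apply]
    exact hx
  let g : (ℕ → ↥(Yᶜ)) ≃ₜ (ℕ → ↥(Yᶜ)) :=
    { toFun := fun x i => ⟨h (ι x) i, (hP (ι x)).1 (fun i => (x i).2) i⟩
      invFun := fun x i => ⟨h.symm (ι x) i, hP' (ι x) (fun i => (x i).2) i⟩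
      left_inv := by
        intro x
        apply hιi
        exact h.symm_apply_apply (ι x)
      right_inv := by
        intro x
        apply hιi
        exact h.apply_symm_apply (ι x)
      continuous_toFun := by
        refine continuous_pi fun i => Continuous.subtype_mk ?_ _
        exact (continuous_apply i).comp (h.continuous.comp hιc)
      continuous_invFun := by
        refine continuous_pi fun i => Continuous.subtype_mk ?_ _
        exact (continuous_apply i).comp (h.symm.continuous.comp hιc) }
  have hg : ∀ x, ι (g x) = h (ι x) := fun _ => rfl
  refine ⟨g, ?_⟩
  apply hιi.image_injective
  rw [← hAB, Set.image_image, Set.image_image]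
  exact Set.image_congr fun x _ => hg x
end

section
/- There exists a zero-dimensional separable metrizable space X such that X has a dense Polish subspace but X^ω is not countable dense homogeneous. (Indeed, one may take X = Q ∪ D ⊆ 2^ω × 2^ω, where z ∈ 2^ω is fixed, D = 2^ω × (2^ω \ {z}), and Q is a countable dense subset of 2^ω × {z}.) -/
/-- A space is zero-dimensional if it has a base consisting of clopen sets. -/
def ZeroDimensional (X : Type*) [TopologicalSpace X] : Prop :=
  ∀ (x : X) (U : Set X), IsOpen U → x ∈ U → ∃ C : Set X, IsClopen C ∧ x ∈ C ∧ C ⊆ U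
open Topology Filter

theorem cantor_neBot (x : ℕ → Bool) : (𝓝[≠] x).NeBot := by
  rw [← mem_closure_iff_nhdsWithin_neBot]
  have ht : Tendsto (fun n => Function.update x n (!x n)) atTop (𝓝 x) := by
    rw [tendsto_pi_nhds]
    intro i
    apply tendsto_const_nhds.congr'
    filter_upwards [eventually_gt_atTop i] with n hn
    rw [Function.update_of_ne hn.ne]
  refine mem_closure_of_tendsto ht (Eventually.of_forall fun n => ?_)
  intro h
  have := congrFun h n
  simp at this

theorem not_polish_of_countable_dense (S : Set (ℕ → Bool)) (hS : S.Countable) (hd : Dense S) :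
    ¬ PolishSpace S := by
  intro hP
  have : Countable S := hS
  have : Nonempty S := hd.nonempty.to_subtype
  obtain ⟨s, t, ht⟩ := nonempty_interior_of_iUnion_of_closed
    (f := fun s : S => ({s} : Set S)) (fun s => isClosed_singleton) (by ext; simp)
  rw [mem_interior] at ht
  obtain ⟨V, hVs, hV, htV⟩ := ht
  obtain ⟨U, hU, rfl⟩ := isOpen_induced_iff.1 hV
  have := cantor_neBot s
  obtain ⟨y, hyU, hyS, hy⟩ := (hd.sdiff_singleton (s : ℕ → Bool)).inter_open_nonempty U hU ⟨t, htV⟩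
  have := hVs (show (⟨y, hyS⟩ : S) ∈ _ from hyU)
  apply hy
  simpa [Subtype.ext_iff] using this

theorem zeroDim_cantor (X : Set ((ℕ → Bool) × (ℕ → Bool))) : ZeroDimensional X := by
  intro x U hU hx
  obtain ⟨W, hW, rfl⟩ := isOpen_induced_iff.1 hU
  obtain ⟨V, hV, hxV, hVW⟩ := compact_exists_isClopen_in_isOpen hW hx
  exact ⟨Subtype.val ⁻¹' V, hV.preimage continuous_subtype_val, hxV, Set.preimage_mono hVW⟩

/-- There exists a zero-dimensional (separable metrizable) space `X` such that
`X` has a dense Polish subspace while `X^ω` is not countable dense homogeneous.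
Indeed, one may take `X = Q ∪ D ⊆ 2^ω × 2^ω`, where `z ∈ 2^ω` is fixed,
`D = 2^ω × (2^ω \ {z})`, and `Q` is a countable dense subset of `2^ω × {z}`. -/
theorem statement19 :
    ∃ X : Set ((ℕ → Bool) × (ℕ → Bool)),
      ZeroDimensional X ∧
      (∃ G : Set X, Dense G ∧ PolishSpace G) ∧
      ¬ IsCDH (ℕ → X) ∧
      ∃ (z : ℕ → Bool) (Q : Set ((ℕ → Bool) × (ℕ → Bool))),
        Q.Countable ∧ Q ⊆ Set.univ ×ˢ ({z} : Set (ℕ → Bool)) ∧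
        Set.univ ×ˢ ({z} : Set (ℕ → Bool)) ⊆ closure Q ∧
        X = Q ∪ Set.univ ×ˢ ({z}ᶜ : Set (ℕ → Bool)) := by
  obtain ⟨S, hSc, hSd⟩ := TopologicalSpace.exists_countable_dense (ℕ → Bool)
  let z : ℕ → Bool := fun _ => false
  obtain ⟨X, hX⟩ : ∃ X : Set ((ℕ → Bool) × (ℕ → Bool)),
    X = S ×ˢ {z} ∪ Set.univ ×ˢ ({z}ᶜ : Set (ℕ → Bool)) := ⟨_, rfl⟩
  let D : Set ((ℕ → Bool) × (ℕ → Bool)) := Set.univ ×ˢ ({z}ᶜ : Set (ℕ → Bool))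
  have hDX : D ⊆ X := by rw [hX]; exact Set.subset_union_right
  have hDo : IsOpen D := isOpen_univ.prod isOpen_compl_singleton
  have hDd : Dense D := by
    have := cantor_neBot z
    exact dense_univ.prod (dense_compl_singleton z)
  let G : Set X := Subtype.val ⁻¹' D
  have hGd : Dense G := by
    intro x
    rw [closure_subtype, Subtype.image_preimage_coe, Set.inter_eq_right.2 hDX]
    exact hDd _
  have hGP : PolishSpace G := by
    have : PolishSpace ((ℕ → Bool) × (ℕ → Bool)) := by
      let := TopologicalSpace.upgradeIsCompletelyMetrizable (ℕ → Bool)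
      infer_instance
    have : PolishSpace D := hDo.polishSpace
    let φ : G ≃ₜ D :=
      { toFun := fun g => ⟨g.1.1, g.2⟩
        invFun := fun d => ⟨⟨d.1, hDX d.2⟩, d.2⟩
        left_inv := fun _ => rfl
        right_inv := fun _ => rfl
        continuous_toFun := by fun_prop
        continuous_invFun := by fun_prop }
    exact φ.isClosedEmbedding.polishSpace
  have hSX : ∀ s ∈ S, (s, z) ∈ X := by
    intro s hs; rw [hX]; left; exact ⟨hs, rfl⟩
  refine ⟨X, zeroDim_cantor X, ⟨G, hGd, hGP⟩, ?_, z, S ×ˢ {z}, ?_, ?_, ?_, hX⟩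
  · intro hcdh
    let P : Set (ℕ → X) := Set.univ.pi fun _ => G
    have hPd : Dense P := dense_pi _ fun _ _ => hGd
    obtain ⟨A, hAP, hAc, hAd⟩ := hPd.exists_countable_dense_subset
    have : Countable S := hSc
    let e : S → (ℕ → X) := fun s _ => ⟨(s.1, z), hSX _ s.2⟩
    have hec : Continuous e := by fun_prop
    have hemb : IsEmbedding e := by
      refine IsEmbedding.of_comp (g := fun x : ℕ → X => (x 0).1.1) hec (by fun_prop) ?_
      exact IsEmbedding.subtypeVal
    have hrange : Set.range e = {x | ∀ n, (x n).1.2 = z ∧ x n = x 0} := by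
      ext x
      constructor
      · rintro ⟨s, rfl⟩ n
        exact ⟨rfl, rfl⟩
      · intro hx
        have h0 : (x 0).1.1 ∈ S := by
          have := hX.subset (x 0).2
          rcases this with h | h
          · exact h.1
          · exact absurd (hx 0).1 h.2
        refine ⟨⟨_, h0⟩, ?_⟩
        funext n
        rw [(hx n).2]
        apply Subtype.ext
        exact Prod.ext rfl (hx 0).1.symm
    have hclosed : IsClosed (Set.range e) := by
      rw [hrange, Set.ofPred_forall]
      refine isClosed_iInter fun n => ?_
      exact (isClosed_eq (by fun_prop) (by fun_prop)).inter (isClosed_eq (by fun_prop) (by fun_prop))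
    obtain ⟨h, hh⟩ := hcdh A (A ∪ Set.range e) hAc hAd (hAc.union (Set.countable_range e))
      (hAd.mono Set.subset_union_left)
    have hmem : ∀ s n, h.symm (e s) n ∈ G := by
      intro s n
      have : e s ∈ h '' A := by rw [hh]; right; exact ⟨s, rfl⟩
      obtain ⟨a, ha, hae⟩ := this
      rw [← hae, h.symm_apply_apply]
      exact hAP ha n trivial
    let k : S → (ℕ → G) := fun s n => ⟨h.symm (e s) n, hmem s n⟩
    let v : (ℕ → G) → (ℕ → X) := fun g n => (g n).1
    have hv : Continuous v := by fun_prop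
    have hvi : Function.Injective v := by
      intro a b hab
      funext n
      exact Subtype.ext (congrFun hab n)
    have hk : Continuous k := by fun_prop
    have hvk : IsClosedEmbedding (v ∘ k) :=
      h.symm.isClosedEmbedding.comp ⟨hemb, hclosed⟩
    have hkc : IsClosedEmbedding k := by
      refine ⟨IsEmbedding.of_comp hk hv hvk.isEmbedding, ?_⟩
      have : Set.range k = v ⁻¹' Set.range (v ∘ k) := by
        rw [Set.range_comp, Set.preimage_image_eq _ hvi]
      rw [this]
      exact hvk.isClosed_range.preimage hv
    exact not_polish_of_countable_dense S hSc hSd hkc.polishSpace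
  · exact hSc.prod (Set.countable_singleton z)
  · exact Set.prod_mono (Set.subset_univ _) le_rfl
  · rw [closure_prod_eq, hSd.closure_eq]
    exact Set.prod_mono le_rfl subset_closure
end
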